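/- Let N ≥ 1 be an integer, let C ⊆ ℝ^N be open and convex, and let H : C × ℝ^N → ℝ be smooth. Then the following are equivalent. (i) There exists a twice continuously differentiable function u : C → ℝ (a superpotential) such that H(q, ∇u(q)) = 0 for every q ∈ C. (ii) There exist continuously differentiable maps α from C to the invertible N×N real matrices and β : C → ℝ^N such that, defining Φ_j(q,p) := Σ_{i=1}^N p_i α(q)_{ij} + β_j(q) for 1 ≤ j ≤ N, one has: (a) every (q,p) ∈ C × ℝ^N with Φ_1(q,p) = ⋯ = Φ_N(q,p) = 0 satisfies H(q,p) = 0; and (b) for all 1 ≤ i < j ≤ N, the Poisson bracket {Φ_i, Φ_j} vanishes at every (q,p) ∈ C × ℝ^N with Φ_1(q,p) = ⋯ = Φ_N(q,p) = 0. -/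

import Mathlib

/-- Partial derivative of `F : (q,p) ↦ F q p` in the `i`-th `q`-coordinate. -/
noncomputable def pderivQ {N : ℕ} (F : (Fin N → ℝ) → (Fin N → ℝ) → ℝ) (i : Fin N)
    (q p : Fin N → ℝ) : ℝ :=
  deriv (fun t => F (Function.update q i t) p) (q i)

/-- Partial derivative of `F : (q,p) ↦ F q p` in the `i`-th `p`-coordinate. -/
noncomputable def pderivP {N : ℕ} (F : (Fin N → ℝ) → (Fin N → ℝ) → ℝ) (i : Fin N)
    (q p : Fin N → ℝ) : ℝ :=
  deriv (fun t => F q (Function.update p i t)) (p i)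

/-- Canonical Poisson bracket on phase space `ℝ^N × ℝ^N`. -/
noncomputable def poisson {N : ℕ} (F G : (Fin N → ℝ) → (Fin N → ℝ) → ℝ)
    (q p : Fin N → ℝ) : ℝ :=
  ∑ i : Fin N, (pderivQ F i q p * pderivP G i q p - pderivP F i q p * pderivQ G i q p)

/-- Coordinatewise gradient of `u : ℝ^N → ℝ`. -/
noncomputable def grad {N : ℕ} (u : (Fin N → ℝ) → ℝ) (q : Fin N → ℝ) : Fin N → ℝ :=
  fun i => deriv (fun t => u (Function.update q i t)) (q i)

/-!
If `α q` is invertible, the functions `Φ_j` vanish at exactly one momentum `P q` over `q`, so their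
common zero set is the graph of `P = -β α⁻¹`. Differentiating `Φ_j (q, P q) = 0` expresses the
`q`-derivatives of `Φ_j` on the graph through its `p`-derivatives, and with `J = (∂P_i/∂q_j)` the
matrix of brackets becomes `({Φ_i, Φ_j})_{ij} = αᵀ (Jᵀ - J) α`. Hence the brackets vanish on the
graph if and only if `P` is curl-free, which on a convex set means `P = ∇u` by the Poincaré lemma.
Conversely a superpotential `u` yields `Φ_j = p_j - ∂u/∂q_j`, whose zero set is the graph of `∇u`.
-/

section

open Function Matrix
open scoped ContDiff Topology

section MatrixCalculus

variable {𝕜 E ι : Type*} [NontriviallyNormedField 𝕜] [NormedAddCommGroup E] [NormedSpace 𝕜 E]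
  [Fintype ι] [DecidableEq ι] {n : ℕ∞ω} {A : E → Matrix ι ι 𝕜} {s : Set E}

theorem contDiffOn_matrix_det (hA : ∀ i j, ContDiffOn 𝕜 n (fun x => A x i j) s) :
    ContDiffOn 𝕜 n (fun x => (A x).det) s := by
  simp only [det_apply']
  exact ContDiffOn.sum fun σ _ => contDiffOn_const.mul (contDiffOn_prod fun i _ => hA _ _)

theorem contDiffOn_matrix_adjugate_apply (hA : ∀ i j, ContDiffOn 𝕜 n (fun x => A x i j) s)
    (i j : ι) : ContDiffOn 𝕜 n (fun x => (A x).adjugate i j) s := by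
  simp only [adjugate_apply]
  refine contDiffOn_matrix_det fun k l => ?_
  simp only [updateRow_apply]
  split_ifs
  exacts [contDiffOn_const, hA k l]

theorem contDiffOn_matrix_inv_apply (hA : ∀ i j, ContDiffOn 𝕜 n (fun x => A x i j) s)
    (hunit : ∀ x ∈ s, IsUnit (A x)) (i j : ι) : ContDiffOn 𝕜 n (fun x => (A x)⁻¹ i j) s := by
  simp only [inv_def, Ring.inverse_eq_inv', Matrix.smul_apply, smul_eq_mul]
  have hdet : ∀ x ∈ s, (A x).det ≠ 0 := fun x hx =>
    ((isUnit_iff_isUnit_det _).1 (hunit x hx)).ne_zero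
  exact ((contDiffOn_matrix_det hA).inv hdet).mul (contDiffOn_matrix_adjugate_apply hA i j)

end MatrixCalculus

theorem isSymm_iff_mulVec_dotProduct_comm {R ι : Type*} [CommSemiring R] [Fintype ι]
    {A : Matrix ι ι R} : A.IsSymm ↔ ∀ x y, A *ᵥ x ⬝ᵥ y = A *ᵥ y ⬝ᵥ x := by
  classical
  refine ⟨fun hA x y => ?_, fun h => IsSymm.ext fun i j => ?_⟩
  · rw [dotProduct_comm, dotProduct_mulVec, ← mulVec_transpose, hA.eq]
  · simpa using h (Pi.single i 1) (Pi.single j 1)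

theorem hasDerivAt_comp_update {𝕜 ι F : Type*} [NontriviallyNormedField 𝕜] [Finite ι]
    [DecidableEq ι] [NormedAddCommGroup F] [NormedSpace 𝕜 F] {f : (ι → 𝕜) → F}
    {f' : (ι → 𝕜) →L[𝕜] F} {x : ι → 𝕜} (hf : HasFDerivAt f f' x) (i : ι) :
    HasDerivAt (fun t => f (update x i t)) (f' (Pi.single i 1)) (x i) := by
  cases nonempty_fintype ι
  have hx : HasFDerivAt f f' (update x i (x i)) := by rwa [update_eq_self]
  exact hx.comp_hasDerivAt (x i) (hasDerivAt_update x i (x i))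

theorem exists_contDiffOn_succ_hasFDerivAt_of_fderiv_symmetric {E F : Type*}
    [NormedAddCommGroup E] [NormedSpace ℝ E] [NormedAddCommGroup F] [NormedSpace ℝ F]
    [CompleteSpace F] {n : ℕ∞ω} {s : Set E} {η : E → E →L[ℝ] F} (hn₀ : n ≠ 0) (hnω : n ≠ ω)
    (hso : IsOpen s) (hs : Convex ℝ s) (hη : ContDiffOn ℝ n η s)
    (hsymm : ∀ a ∈ s, ∀ x y, fderiv ℝ η a x y = fderiv ℝ η a y x) :
    ∃ f : E → F, ContDiffOn ℝ (n + 1) f s ∧ ∀ a ∈ s, HasFDerivAt f (η a) a := by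
  obtain ⟨f, hf⟩ :=
    hs.exists_forall_hasFDerivAt_of_fderiv_symmetric hso (hη.differentiableOn hn₀) hsymm
  refine ⟨f, (contDiffOn_succ_iff_fderiv_of_isOpen hso).2 ⟨?_, fun h => absurd h hnω, ?_⟩, hf⟩
  · exact fun a ha => (hf a ha).differentiableAt.differentiableWithinAt
  · exact hη.congr fun a ha => (hf a ha).fderiv

variable {N : ℕ}

section Gradient

variable {n : ℕ∞ω} {C : Set (Fin N → ℝ)} {u : (Fin N → ℝ) → ℝ} {P : (Fin N → ℝ) → Fin N → ℝ}
  {q : Fin N → ℝ}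

/-- The dot product on `ℝ^N` as a continuous bilinear map. It turns a momentum field `P` into the
`1`-form `∑ P_k dq_k`. -/
noncomputable def dotProductL (N : ℕ) : (Fin N → ℝ) →L[ℝ] (Fin N → ℝ) →L[ℝ] ℝ :=
  (dotProductBilin ℝ ℝ).toContinuousBilinearMap

@[simp]
theorem dotProductL_apply (v w : Fin N → ℝ) : dotProductL N v w = v ⬝ᵥ w :=
  rfl

theorem grad_apply_of_hasFDerivAt {u' : (Fin N → ℝ) →L[ℝ] ℝ} (hu : HasFDerivAt u u' q)
    (k : Fin N) : grad u q k = u' (Pi.single k 1) :=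
  (hasDerivAt_comp_update hu k).deriv

theorem grad_eq_of_hasFDerivAt_dotProductL {v : Fin N → ℝ}
    (hu : HasFDerivAt u (dotProductL N v) q) : grad u q = v := by
  ext k
  simp [grad_apply_of_hasFDerivAt hu]

theorem fderiv_eq_dotProductL_grad (hu : DifferentiableAt ℝ u q) :
    fderiv ℝ u q = dotProductL N (grad u q) :=
  ContinuousLinearMap.coe_injective <| (Pi.basisFun ℝ (Fin N)).ext fun k => by
    simp [grad_apply_of_hasFDerivAt hu.hasFDerivAt]

theorem contDiffAt_grad (hu : ContDiffAt ℝ (n + 1) u q) : ContDiffAt ℝ n (grad u) q := by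
  have hdiff : ∀ᶠ q' in 𝓝 q, DifferentiableAt ℝ u q' :=
    ((hu.of_le le_add_self).eventually (by simp)).mono fun _ h => h.differentiableAt one_ne_zero
  have hpartial (k : Fin N) : ContDiffAt ℝ n (fun q' => fderiv ℝ u q' (Pi.single k 1)) q :=
    (hu.fderiv_right le_rfl).clm_apply contDiffAt_const
  exact contDiffAt_pi.2 fun k => (hpartial k).congr_of_eventuallyEq <|
    hdiff.mono fun q' hq' => grad_apply_of_hasFDerivAt hq'.hasFDerivAt k

/-- The Jacobian matrix `(∂P_i/∂q_j)_{ij}` of a vector field on `ℝ^N`; for a momentum field, its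
failure to be symmetric is the curl. -/
noncomputable def jacobian (P : (Fin N → ℝ) → Fin N → ℝ) (q : Fin N → ℝ) :
    Matrix (Fin N) (Fin N) ℝ :=
  LinearMap.toMatrix' (fderiv ℝ P q).toLinearMap

theorem jacobian_mulVec (v : Fin N → ℝ) : jacobian P q *ᵥ v = fderiv ℝ P q v :=
  LinearMap.toMatrix'_mulVec _ v

theorem isSymm_jacobian_iff (hP : DifferentiableAt ℝ P q) :
    (jacobian P q).IsSymm ↔ ∀ x y, fderiv ℝ (fun q' => dotProductL N (P q')) q x y =
      fderiv ℝ (fun q' => dotProductL N (P q')) q y x := by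
  have hform : fderiv ℝ (fun q' => dotProductL N (P q')) q = (dotProductL N).comp (fderiv ℝ P q) :=
    ((dotProductL N).hasFDerivAt.comp q hP.hasFDerivAt).fderiv
  simp only [isSymm_iff_mulVec_dotProduct_comm, jacobian_mulVec, hform,
    ContinuousLinearMap.comp_apply, dotProductL_apply]

theorem isSymm_jacobian_grad (hu : ContDiffAt ℝ 2 u q) : (jacobian (grad u) q).IsSymm := by
  have hgrad : DifferentiableAt ℝ (grad u) q :=
    (contDiffAt_grad (n := 1) hu).differentiableAt one_ne_zero
  have hform : fderiv ℝ u =ᶠ[𝓝 q] fun q' => dotProductL N (grad u q') :=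
    (hu.eventually (by simp)).mono fun q' hq' =>
      fderiv_eq_dotProductL_grad (hq'.differentiableAt two_ne_zero)
  rw [isSymm_jacobian_iff hgrad, ← hform.fderiv_eq]
  exact hu.isSymmSndFDerivAt (by simp)

theorem exists_grad_eq_of_isSymm_jacobian (hn₀ : n ≠ 0) (hnω : n ≠ ω) (hCo : IsOpen C)
    (hCc : Convex ℝ C) (hP : ContDiffOn ℝ n P C) (hsymm : ∀ q ∈ C, (jacobian P q).IsSymm) :
    ∃ u : (Fin N → ℝ) → ℝ, ContDiffOn ℝ (n + 1) u C ∧ ∀ q ∈ C, grad u q = P q := by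
  obtain ⟨u, hu, hu'⟩ := exists_contDiffOn_succ_hasFDerivAt_of_fderiv_symmetric hn₀ hnω hCo hCc
    ((dotProductL N).contDiff.comp_contDiffOn hP) fun q hq =>
      (isSymm_jacobian_iff ((hP.contDiffAt (hCo.mem_nhds hq)).differentiableAt hn₀)).1 (hsymm q hq)
  exact ⟨u, hu, fun q hq => grad_eq_of_hasFDerivAt_dotProductL (hu' q hq)⟩

end Gradient

section PoissonMatrix

variable {ι : Type*} {F : ι → (Fin N → ℝ) → (Fin N → ℝ) → ℝ} {q p : Fin N → ℝ}
  {P : (Fin N → ℝ) → Fin N → ℝ}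

theorem poisson_self (G : (Fin N → ℝ) → (Fin N → ℝ) → ℝ) (q p : Fin N → ℝ) :
    poisson G G q p = 0 :=
  Finset.sum_eq_zero fun _ _ => by ring

theorem poisson_antisymm (G K : (Fin N → ℝ) → (Fin N → ℝ) → ℝ) (q p : Fin N → ℝ) :
    poisson G K q p = -poisson K G q p := by
  rw [poisson, poisson, ← Finset.sum_neg_distrib]
  exact Finset.sum_congr rfl fun _ _ => by ring

/-- The matrix `({F_i, F_j})_{ij}` of Poisson brackets of a family of functions on phase space. -/
noncomputable def poissonMatrix (F : ι → (Fin N → ℝ) → (Fin N → ℝ) → ℝ) (q p : Fin N → ℝ) :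
    Matrix ι ι ℝ :=
  of fun i j => poisson (F i) (F j) q p

/-- The Jacobian matrix `(∂F_j/∂q_k)_{jk}` in the positions, with the momenta fixed. -/
noncomputable def jacobianQ (F : ι → (Fin N → ℝ) → (Fin N → ℝ) → ℝ) (q p : Fin N → ℝ) :
    Matrix ι (Fin N) ℝ :=
  of fun j k => pderivQ (F j) k q p

/-- The Jacobian matrix `(∂F_j/∂p_k)_{jk}` in the momenta, with the positions fixed. -/
noncomputable def jacobianP (F : ι → (Fin N → ℝ) → (Fin N → ℝ) → ℝ) (q p : Fin N → ℝ) :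
    Matrix ι (Fin N) ℝ :=
  of fun j k => pderivP (F j) k q p

theorem poissonMatrix_eq_zero_iff [LinearOrder ι] :
    poissonMatrix F q p = 0 ↔ ∀ i j, i < j → poisson (F i) (F j) q p = 0 := by
  refine ⟨fun h i j _ => congrFun₂ h i j, fun h => ?_⟩
  ext i j
  rcases lt_trichotomy i j with hij | rfl | hji
  · exact h i j hij
  · exact poisson_self _ _ _
  · exact (poisson_antisymm _ _ _ _).trans (neg_eq_zero.2 (h j i hji))

theorem poissonMatrix_eq_jacobianQ_mul_sub : poissonMatrix F q p =
    jacobianQ F q p * (jacobianP F q p)ᵀ - jacobianP F q p * (jacobianQ F q p)ᵀ := by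
  ext i j
  simp only [poissonMatrix, jacobianQ, jacobianP, poisson, of_apply, Matrix.sub_apply, mul_apply,
    transpose_apply, Finset.sum_sub_distrib]

theorem fderiv_uncurry_apply {G : (Fin N → ℝ) → (Fin N → ℝ) → ℝ}
    (hG : DifferentiableAt ℝ (uncurry G) (q, p)) (v w : Fin N → ℝ) :
    fderiv ℝ (uncurry G) (q, p) (v, w) =
      (fun k => pderivQ G k q p) ⬝ᵥ v + (fun k => pderivP G k q p) ⬝ᵥ w := by
  have hq : HasFDerivAt (fun q' => G q' p) _ q :=
    HasFDerivAt.comp (f := (·, p)) q hG.hasFDerivAt (hasFDerivAt_prodMk_left q p)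
  have hp : HasFDerivAt (G q) _ p :=
    HasFDerivAt.comp (g := uncurry G) p hG.hasFDerivAt (hasFDerivAt_prodMk_right q p)
  calc fderiv ℝ (uncurry G) (q, p) (v, w)
    _ = fderiv ℝ (fun q' => G q' p) q v + fderiv ℝ (G q) p w := by
      rw [hq.fderiv, hp.fderiv]
      simp [← map_add]
    _ = grad (fun q' => G q' p) q ⬝ᵥ v + grad (G q) p ⬝ᵥ w := by
      rw [fderiv_eq_dotProductL_grad hq.differentiableAt,
        fderiv_eq_dotProductL_grad hp.differentiableAt, dotProductL_apply, dotProductL_apply]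

theorem jacobianQ_eq_of_eventually_eq_zero (hF : ∀ j, DifferentiableAt ℝ (uncurry (F j)) (q, P q))
    (hP : DifferentiableAt ℝ P q) (hzero : ∀ j, ∀ᶠ q' in 𝓝 q, F j q' (P q') = 0) :
    jacobianQ F q (P q) = -(jacobianP F q (P q) * jacobian P q) := by
  refine eq_neg_of_add_eq_zero_left (ext_iff_mulVec.2 fun v => funext fun j => ?_)
  have hgraph := (hF j).hasFDerivAt.comp q ((hasFDerivAt_id q).prodMk hP.hasFDerivAt)
  have hderiv := hgraph.unique ((hasFDerivAt_const 0 q).congr_of_eventuallyEq (hzero j))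
  rw [add_mulVec, ← mulVec_mulVec, jacobian_mulVec, zero_mulVec]
  calc (jacobianQ F q (P q) *ᵥ v + jacobianP F q (P q) *ᵥ fderiv ℝ P q v) j
    _ = fderiv ℝ (uncurry (F j)) (q, P q) (v, fderiv ℝ P q v) :=
      (fderiv_uncurry_apply (hF j) _ _).symm
    _ = 0 := congr($hderiv v)

theorem poissonMatrix_eq_of_eventually_eq_zero
    (hF : ∀ j, DifferentiableAt ℝ (uncurry (F j)) (q, P q)) (hP : DifferentiableAt ℝ P q)
    (hzero : ∀ j, ∀ᶠ q' in 𝓝 q, F j q' (P q') = 0) :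
    poissonMatrix F q (P q) =
      jacobianP F q (P q) * ((jacobian P q)ᵀ - jacobian P q) * (jacobianP F q (P q))ᵀ := by
  rw [poissonMatrix_eq_jacobianQ_mul_sub, jacobianQ_eq_of_eventually_eq_zero hF hP hzero]
  simp only [transpose_neg, transpose_mul, Matrix.mul_sub, Matrix.sub_mul, Matrix.mul_assoc,
    Matrix.neg_mul, Matrix.mul_neg]
  abel

theorem poissonMatrix_eq_zero_iff_isSymm_jacobian {F : Fin N → (Fin N → ℝ) → (Fin N → ℝ) → ℝ}
    (hF : ∀ j, DifferentiableAt ℝ (uncurry (F j)) (q, P q)) (hP : DifferentiableAt ℝ P q)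
    (hzero : ∀ j, ∀ᶠ q' in 𝓝 q, F j q' (P q') = 0) (hunit : IsUnit (jacobianP F q (P q))) :
    poissonMatrix F q (P q) = 0 ↔ (jacobian P q).IsSymm := by
  rw [poissonMatrix_eq_of_eventually_eq_zero hF hP hzero,
    ((isUnit_transpose _).2 hunit).mul_left_eq_zero, hunit.mul_right_eq_zero, sub_eq_zero]
  rfl

end PoissonMatrix

section LinearIntegral

variable {n : ℕ∞ω} {C : Set (Fin N → ℝ)} {ι : Type*} {q p : Fin N → ℝ}

/-- The family `Φ_j(q, p) = ∑ i, p_i α(q)_{ij} + β_j(q)` of functions linear in the momenta. -/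
def linearIntegral (α : (Fin N → ℝ) → Matrix (Fin N) ι ℝ) (β : (Fin N → ℝ) → ι → ℝ) (j : ι)
    (q p : Fin N → ℝ) : ℝ :=
  (∑ i, p i * α q i j) + β q j

theorem differentiableAt_uncurry_linearIntegral {α : (Fin N → ℝ) → Matrix (Fin N) ι ℝ}
    {β : (Fin N → ℝ) → ι → ℝ} {j : ι} (hα : ∀ i, DifferentiableAt ℝ (fun q' => α q' i j) q)
    (hβ : DifferentiableAt ℝ (fun q' => β q' j) q) :
    DifferentiableAt ℝ (uncurry (linearIntegral α β j)) (q, p) := by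
  have hα' (i : Fin N) :
      DifferentiableAt ℝ (fun x : (Fin N → ℝ) × (Fin N → ℝ) => α x.1 i j) (q, p) :=
    DifferentiableAt.comp (g := fun q' => α q' i j) (q, p) (hα i) differentiableAt_fst
  have hβ' : DifferentiableAt ℝ (fun x : (Fin N → ℝ) × (Fin N → ℝ) => β x.1 j) (q, p) :=
    DifferentiableAt.comp (g := fun q' => β q' j) (q, p) hβ differentiableAt_fst
  have hp (i : Fin N) :
      DifferentiableAt ℝ (fun x : (Fin N → ℝ) × (Fin N → ℝ) => x.2 i) (q, p) := by
    fun_prop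
  exact (DifferentiableAt.fun_sum fun i _ => (hp i).mul (hα' i)).add hβ'

theorem jacobianP_linearIntegral (α : (Fin N → ℝ) → Matrix (Fin N) ι ℝ)
    (β : (Fin N → ℝ) → ι → ℝ) (q p : Fin N → ℝ) :
    jacobianP (linearIntegral α β) q p = (α q)ᵀ := by
  ext j k
  have h : HasFDerivAt (linearIntegral α β j q) (dotProductL N fun i => α q i j) p := by
    refine ((dotProductL N fun i => α q i j).hasFDerivAt.add_const (β q j)).congr_of_eventuallyEq ?_
    exact .of_forall fun p' => by simp [linearIntegral, dotProduct, mul_comm]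
  exact congrFun (grad_eq_of_hasFDerivAt_dotProductL h) k

variable {α : (Fin N → ℝ) → Matrix (Fin N) (Fin N) ℝ} {β P : (Fin N → ℝ) → Fin N → ℝ}

/-- The momentum at which all the functions `linearIntegral α β j` vanish over `q`, provided `α q`
is invertible (otherwise `(α q)⁻¹ = 0` and the value is meaningless). -/
noncomputable def onShellMomentum (α : (Fin N → ℝ) → Matrix (Fin N) (Fin N) ℝ)
    (β : (Fin N → ℝ) → Fin N → ℝ) (q : Fin N → ℝ) : Fin N → ℝ :=
  -β q ᵥ* (α q)⁻¹

theorem forall_linearIntegral_eq_zero_iff (hunit : IsUnit (α q)) :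
    (∀ j, linearIntegral α β j q p = 0) ↔ p = onShellMomentum α β q := by
  have hdet := (isUnit_iff_isUnit_det _).1 hunit
  calc (∀ j, linearIntegral α β j q p = 0)
    _ ↔ p ᵥ* α q = -β q := by rw [eq_neg_iff_add_eq_zero, funext_iff]; rfl
    _ ↔ p = onShellMomentum α β q := by
      refine ⟨fun h => ?_, fun h => ?_⟩
      · rw [onShellMomentum, ← h, vecMul_vecMul, mul_nonsing_inv _ hdet, vecMul_one]
      · rw [h, onShellMomentum, vecMul_vecMul, nonsing_inv_mul _ hdet, vecMul_one]

theorem contDiffOn_onShellMomentum (hα : ∀ i j, ContDiffOn ℝ n (fun q => α q i j) C)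
    (hβ : ∀ j, ContDiffOn ℝ n (fun q => β q j) C) (hunit : ∀ q ∈ C, IsUnit (α q)) :
    ContDiffOn ℝ n (onShellMomentum α β) C := by
  refine contDiffOn_pi.2 fun j => ?_
  simp only [onShellMomentum, vecMul, dotProduct, Pi.neg_apply]
  exact ContDiffOn.sum fun i _ => (hβ i).neg.mul (contDiffOn_matrix_inv_apply hα hunit i j)

theorem poissonMatrix_linearIntegral_eq_zero_iff
    (hα : ∀ i j, DifferentiableAt ℝ (fun q' => α q' i j) q)
    (hβ : ∀ j, DifferentiableAt ℝ (fun q' => β q' j) q) (hP : DifferentiableAt ℝ P q)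
    (hzero : ∀ j, ∀ᶠ q' in 𝓝 q, linearIntegral α β j q' (P q') = 0) (hunit : IsUnit (α q)) :
    poissonMatrix (linearIntegral α β) q (P q) = 0 ↔ (jacobian P q).IsSymm := by
  refine poissonMatrix_eq_zero_iff_isSymm_jacobian
    (fun j => differentiableAt_uncurry_linearIntegral (fun i => hα i j) (hβ j)) hP hzero ?_
  rw [jacobianP_linearIntegral]
  exact (isUnit_transpose _).2 hunit

theorem forall_linearIntegral_one_neg_eq_zero_iff :
    (∀ j, linearIntegral (fun _ => 1) (fun q' => -P q') j q p = 0) ↔ p = P q := by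
  rw [forall_linearIntegral_eq_zero_iff isUnit_one]
  simp only [onShellMomentum, neg_neg, inv_one, vecMul_one]

theorem poissonMatrix_linearIntegral_one_neg_grad {u : (Fin N → ℝ) → ℝ}
    (hu : ContDiffAt ℝ 2 u q) :
    poissonMatrix (linearIntegral (fun _ => 1) fun q' => -grad u q') q (grad u q) = 0 := by
  have hgrad : DifferentiableAt ℝ (grad u) q :=
    (contDiffAt_grad (n := 1) hu).differentiableAt one_ne_zero
  have hzero (j : Fin N) (q' : Fin N → ℝ) :
      linearIntegral (fun _ => 1) (fun q => -grad u q) j q' (grad u q') = 0 :=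
    forall_linearIntegral_one_neg_eq_zero_iff.2 rfl j
  exact (poissonMatrix_linearIntegral_eq_zero_iff (α := fun _ => 1)
    (fun _ _ => differentiableAt_const _) (differentiableAt_pi.1 hgrad.neg) hgrad
    (fun j => .of_forall (hzero j)) isUnit_one).2 (isSymm_jacobian_grad hu)

theorem isSymm_jacobian_onShellMomentum (hn : n ≠ 0) (hCo : IsOpen C)
    (hα : ∀ i j, ContDiffOn ℝ n (fun q => α q i j) C)
    (hβ : ∀ j, ContDiffOn ℝ n (fun q => β q j) C) (hunit : ∀ q ∈ C, IsUnit (α q)) (hq : q ∈ C)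
    (hpoisson : poissonMatrix (linearIntegral α β) q (onShellMomentum α β q) = 0) :
    (jacobian (onShellMomentum α β) q).IsSymm := by
  have hCq : C ∈ 𝓝 q := hCo.mem_nhds hq
  refine (poissonMatrix_linearIntegral_eq_zero_iff
    (fun i j => ((hα i j).contDiffAt hCq).differentiableAt hn)
    (fun j => ((hβ j).contDiffAt hCq).differentiableAt hn)
    (((contDiffOn_onShellMomentum hα hβ hunit).contDiffAt hCq).differentiableAt hn)
    (fun j => ?_) (hunit q hq)).1 hpoisson
  filter_upwards [hCq] with q' hq'
  exact (forall_linearIntegral_eq_zero_iff (hunit q' hq')).2 rfl j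

end LinearIntegral

theorem superpotential_iff_linear_first_integrals_general {n : ℕ∞ω} (hn₀ : n ≠ 0) (hnω : n ≠ ω)
    {C : Set (Fin N → ℝ)} (hCo : IsOpen C) (hCc : Convex ℝ C)
    (H : (Fin N → ℝ) → (Fin N → ℝ) → ℝ) :
    (∃ u : (Fin N → ℝ) → ℝ, ContDiffOn ℝ (n + 1) u C ∧ ∀ q ∈ C, H q (grad u q) = 0) ↔
    (∃ (α : (Fin N → ℝ) → Matrix (Fin N) (Fin N) ℝ) (β : (Fin N → ℝ) → Fin N → ℝ),
      (∀ i j, ContDiffOn ℝ n (fun q => α q i j) C) ∧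
      (∀ j, ContDiffOn ℝ n (fun q => β q j) C) ∧
      (∀ q ∈ C, IsUnit (α q)) ∧
      (∀ q ∈ C, ∀ p, (∀ j, linearIntegral α β j q p = 0) → H q p = 0) ∧
      (∀ i j, i < j → ∀ q ∈ C, ∀ p, (∀ k, linearIntegral α β k q p = 0) →
        poisson (linearIntegral α β i) (linearIntegral α β j) q p = 0)) := by
  constructor
  · rintro ⟨u, hu, hHu⟩
    have hu' : ∀ q ∈ C, ContDiffAt ℝ (n + 1) u q := fun q hq => hu.contDiffAt (hCo.mem_nhds hq)
    have hβ : ContDiffOn ℝ n (fun q => -grad u q) C := fun q hq =>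
      (contDiffAt_grad (hu' q hq)).neg.contDiffWithinAt
    have htwo : 2 ≤ n + 1 := one_add_one_eq_two.symm.trans_le <|
      add_le_add_left (ENat.one_le_iff_ne_zero_withTop.2 hn₀) 1
    refine ⟨fun _ => 1, fun q => -grad u q, fun _ _ => contDiffOn_const, contDiffOn_pi.1 hβ,
      fun _ _ => isUnit_one, fun q hq p hp => ?_, fun i j hij q hq p hp => ?_⟩ <;>
      rw [forall_linearIntegral_one_neg_eq_zero_iff.1 hp]
    · exact hHu q hq
    · exact poissonMatrix_eq_zero_iff.1
        (poissonMatrix_linearIntegral_one_neg_grad ((hu' q hq).of_le htwo)) i j hij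
  · rintro ⟨α, β, hα, hβ, hunit, hH, hbracket⟩
    have hzero : ∀ q ∈ C, ∀ j, linearIntegral α β j q (onShellMomentum α β q) = 0 := fun q hq =>
      (forall_linearIntegral_eq_zero_iff (hunit q hq)).2 rfl
    obtain ⟨u, hu, hgrad⟩ := exists_grad_eq_of_isSymm_jacobian hn₀ hnω hCo hCc
      (contDiffOn_onShellMomentum hα hβ hunit) fun q hq =>
        isSymm_jacobian_onShellMomentum hn₀ hCo hα hβ hunit hq <|
          poissonMatrix_eq_zero_iff.2 fun i j hij => hbracket i j hij q hq _ (hzero q hq)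
    exact ⟨u, hu, fun q hq => hH q hq _ (hgrad q hq ▸ hzero q hq)⟩

end

/-- Proposition 1.1 of Dancer–Wang: existence of a superpotential is equivalent to the
existence of `N` independent "on-shell" first integrals which are linear in momenta. -/
theorem superpotential_iff_linear_first_integrals
    (N : ℕ) (hN : 1 ≤ N) (C : Set (Fin N → ℝ)) (hCopen : IsOpen C) (hCconv : Convex ℝ C)
    (H : (Fin N → ℝ) → (Fin N → ℝ) → ℝ)
    (hH : ContDiffOn ℝ (⊤ : ℕ∞) (fun x : (Fin N → ℝ) × (Fin N → ℝ) => H x.1 x.2)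
      (C ×ˢ (Set.univ : Set (Fin N → ℝ)))) :
    (∃ u : (Fin N → ℝ) → ℝ, ContDiffOn ℝ 2 u C ∧ ∀ q ∈ C, H q (grad u q) = 0) ↔
    (∃ (α : (Fin N → ℝ) → Matrix (Fin N) (Fin N) ℝ) (β : (Fin N → ℝ) → (Fin N → ℝ)),
      (∀ i j : Fin N, ContDiffOn ℝ 1 (fun q => α q i j) C) ∧
      (∀ j : Fin N, ContDiffOn ℝ 1 (fun q => β q j) C) ∧
      (∀ q ∈ C, IsUnit (α q)) ∧
      -- (a) the common zero set of the Φⱼ is contained in the zero set of H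
      (∀ q ∈ C, ∀ p : Fin N → ℝ,
        (∀ j : Fin N, (∑ i : Fin N, p i * α q i j) + β q j = 0) → H q p = 0) ∧
      -- (b) the Poisson brackets {Φᵢ, Φⱼ} vanish on the common zero set of the Φₖ
      (∀ i j : Fin N, i < j → ∀ q ∈ C, ∀ p : Fin N → ℝ,
        (∀ k : Fin N, (∑ l : Fin N, p l * α q l k) + β q k = 0) →
        poisson (fun q' p' => (∑ l : Fin N, p' l * α q' l i) + β q' i)
                (fun q' p' => (∑ l : Fin N, p' l * α q' l j) + β q' j) q p = 0)) :=
  superpotential_iff_linear_first_integrals_general one_ne_zero (by decide) hCopen hCconv H
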